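/- Let R be the free associative algebra of rank r > 1 over a field, with filtration R(n) and homogeneous components R_n (span of monomials of degree n). Let M = uR be a cyclic R-module such that dim(uR(n))/rⁿ → 0, and let N ≤ M be a submodule such that for every m, the finitely generated submodule (uR(m) ∩ N)·R also satisfies dim((uR(m) ∩ N)·R(n))/rⁿ → 0 as n → ∞, and dim((uR(n)+N)/N)/rⁿ → 0. Then dim(uR(t))/r^t → 0. Equivalently: if neither N nor M/N has maximal growth, then M does not have maximal growth. -/

import Mathlib

open Module Filter

noncomputable section

/-- The `n`-th term of the standard filtration of the free associative algebra. -/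
def freeAlgFil (Φ : Type*) [Field Φ] (r n : ℕ) : Submodule Φ (FreeAlgebra Φ (Fin r)) :=
  Submodule.span Φ
    {x | ∃ w : List (Fin r), w.length ≤ n ∧ x = (w.map (FreeAlgebra.ι Φ)).prod}

/-- The ball `u·R(n)` of radius `n` in the cyclic module generated by `u`. -/
def cycBall (Φ : Type*) [Field Φ] (r : ℕ) {M : Type*} [AddCommGroup M]
    [Module (FreeAlgebra Φ (Fin r)) M] [Module Φ M]
    [IsScalarTower Φ (FreeAlgebra Φ (Fin r)) M] (u : M) (n : ℕ) : Submodule Φ M :=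
  Submodule.span Φ ((fun p : FreeAlgebra Φ (Fin r) => p • u) '' (freeAlgFil Φ r n))

/-!
Every word of length at most `m + k` splits as a prefix of length at most `k` times a suffix of
length at most `m`, so `u·R(m + k) ⊆ R(k)·(u·R(m))`. Split `u·R(m)` as `(u·R(m) ∩ N) ⊕ W`, where `W`
maps isomorphically onto the image of `u·R(m)` in `M/N`. As `dim R(k) ≤ 2 rᵏ`, this gives
`dim u·R(m + k) ≤ dim (R(k)·(u·R(m) ∩ N)) + 2 rᵏ dim W`. After division by `r^(m + k)` the second
term is `2 dim W / rᵐ`, which a suitable choice of `m` makes small; with `m` fixed, the first term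
tends to `0` as `k → ∞`.
-/

section Asymptotics

open scoped Topology

theorem tendsto_div_pow_zero_of_le_add {b q : ℕ → ℝ} {a : ℕ → ℕ → ℝ} {C r : ℝ} (hr : 0 < r)
    (hb : ∀ n, 0 ≤ b n) (hbound : ∀ m k, b (m + k) ≤ a m k + C * r ^ k * q m)
    (ha : ∀ m, Tendsto (fun k ↦ a m k / r ^ k) atTop (𝓝 0))
    (hq : Tendsto (fun m ↦ q m / r ^ m) atTop (𝓝 0)) :
    Tendsto (fun n ↦ b n / r ^ n) atTop (𝓝 0) := by
  have hscaled (m k : ℕ) :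
      b (m + k) / r ^ (m + k) ≤ a m k / r ^ k / r ^ m + C * (q m / r ^ m) := by
    calc b (m + k) / r ^ (m + k)
        ≤ (a m k + C * r ^ k * q m) / r ^ (m + k) := by gcongr; exact hbound m k
      _ = a m k / r ^ k / r ^ m + C * (q m / r ^ m) := by rw [pow_add]; field_simp
  refine tendsto_order.2 ⟨fun c hc ↦ Eventually.of_forall fun n ↦
    hc.trans_le (div_nonneg (hb n) (by positivity)), fun ε hε ↦ ?_⟩
  obtain ⟨m, hm⟩ : ∃ m, C * (q m / r ^ m) < ε :=
    ((hq.const_mul C).eventually_lt_const (by simpa using hε)).exists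
  have hlim : Tendsto (fun k ↦ a m k / r ^ k / r ^ m + C * (q m / r ^ m)) atTop
      (𝓝 (C * (q m / r ^ m))) := by
    simpa using ((ha m).div_const (r ^ m)).add_const (C * (q m / r ^ m))
  rw [← map_add_atTop_eq_nat m, eventually_map]
  filter_upwards [hlim.eventually_lt_const hm] with k hk
  rw [add_comm k m]
  exact (hscaled m k).trans_lt hk

end Asymptotics

section LinearAlgebra

variable {K V W X : Type*} [Field K] [AddCommGroup V] [Module K V] [AddCommGroup W] [Module K W]
  [AddCommGroup X] [Module K X]

theorem finrank_map₂_le (f : V →ₗ[K] W →ₗ[K] X) (p : Submodule K V) (q : Submodule K W)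
    [FiniteDimensional K p] [FiniteDimensional K q] :
    finrank K (Submodule.map₂ f p q) ≤ finrank K p * finrank K q := by
  rw [TensorProduct.map₂_eq_range_lift_comp_mapIncl, ← finrank_tensorProduct]
  exact LinearMap.finrank_range_le _

theorem exists_inf_ker_sup_eq_and_finrank_eq (f : V →ₗ[K] W) (p : Submodule K V) :
    ∃ q, (p ⊓ LinearMap.ker f) ⊔ q = p ∧ finrank K q = finrank K (p.map f) := by
  obtain ⟨q, hdisj, hsup⟩ :=
    IsModularLattice.exists_disjoint_and_sup_eq (inf_le_left : p ⊓ LinearMap.ker f ≤ p)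
  have hqp : q ≤ p := hsup ▸ le_sup_right
  have hinj : Function.Injective (f.domRestrict q) := by
    rw [LinearMap.injective_domRestrict_iff, ← inf_eq_left.2 hqp, disjoint_assoc]
    exact hdisj.symm
  have hmap : p.map f = q.map f := by
    have hker : (p ⊓ LinearMap.ker f).map f = ⊥ :=
      LinearMap.le_ker_iff_map.1 inf_le_right
    conv_lhs => rw [← hsup, Submodule.map_sup, hker, bot_sup_eq]
  refine ⟨q, hsup, ?_⟩
  rw [hmap, ← LinearMap.range_domRestrict, LinearMap.finrank_range_of_inj hinj]

end LinearAlgebra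

section SubmoduleSMul

variable {K A M : Type*} [CommSemiring K] [Semiring A] [Algebra K A] [AddCommMonoid M]
  [Module K M] [Module A M] [IsScalarTower K A M]

theorem smul_eq_map₂_lsmul (F : Submodule K A) (X : Submodule K M) :
    F • X = Submodule.map₂ (Algebra.lsmul K K M).toLinearMap F X :=
  le_antisymm
    (Submodule.smul_le.2 fun _ hp _ hx ↦
      Submodule.apply_mem_map₂ (Algebra.lsmul K K M).toLinearMap hp hx)
    (Submodule.map₂_le.2 fun _ hp _ hx ↦ Submodule.smul_mem_smul hp hx)

theorem span_setOf_eq_smul (F : Submodule K A) (X : Submodule K M) :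
    Submodule.span K {y | ∃ p ∈ F, ∃ x ∈ X, y = p • x} = F • X := by
  rw [smul_eq_map₂_lsmul, Submodule.map₂_eq_span_image2]
  congr 1
  ext y
  simp [Set.mem_smul, eq_comm (a := y)]

theorem span_image_smul_eq_smul_span_singleton (F : Submodule K A) (u : M) :
    Submodule.span K ((fun p : A ↦ p • u) '' F) = F • Submodule.span K {u} := by
  rw [smul_eq_map₂_lsmul, Submodule.map₂_span_singleton_eq_map_flip]
  exact (Submodule.span_image ((Algebra.lsmul K K M).toLinearMap.flip u)).trans
    (by rw [Submodule.span_eq])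

theorem span_image_eq_map_restrictScalars {W : Type*} [AddCommMonoid W] [Module K W] [Module A W]
    [IsScalarTower K A W] (f : M →ₗ[A] W) (X : Submodule K M) :
    Submodule.span K (f '' X) = X.map (f.restrictScalars K) := by
  rw [← LinearMap.coe_restrictScalars K, Submodule.span_image, Submodule.span_eq]

end SubmoduleSMul

section Growth

variable {K A M W : Type*} [Field K] [Ring A] [Algebra K A] [AddCommGroup M] [Module K M]
  [Module A M] [IsScalarTower K A M] [AddCommGroup W] [Module K W]

instance finiteDimensional_smul (F : Submodule K A) (X : Submodule K M) [FiniteDimensional K F]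
    [FiniteDimensional K X] : FiniteDimensional K ↥(F • X) := by
  rw [smul_eq_map₂_lsmul]
  exact Module.Finite.iff_fg.2
    (Submodule.FG.map₂ _ (Module.Finite.iff_fg.1 ‹_›) (Module.Finite.iff_fg.1 ‹_›))

theorem finrank_smul_le (F : Submodule K A) (X : Submodule K M) [FiniteDimensional K F]
    [FiniteDimensional K X] : finrank K ↥(F • X) ≤ finrank K F * finrank K X := by
  rw [smul_eq_map₂_lsmul]
  exact finrank_map₂_le _ _ _

theorem finrank_smul_le_inf_ker_add_map (F : Submodule K A) (X : Submodule K M)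
    [FiniteDimensional K F] [FiniteDimensional K X] (f : M →ₗ[K] W) :
    finrank K ↥(F • X) ≤
      finrank K ↥(F • (X ⊓ LinearMap.ker f)) + finrank K F * finrank K (X.map f) := by
  obtain ⟨Y, hsup, hY⟩ := exists_inf_ker_sup_eq_and_finrank_eq f X
  have : FiniteDimensional K Y := Submodule.finiteDimensional_of_le (hsup ▸ le_sup_right)
  calc finrank K ↥(F • X)
      = finrank K ↥(F • (X ⊓ LinearMap.ker f) ⊔ F • Y) := by rw [← Submodule.smul_sup, hsup]
    _ ≤ finrank K ↥(F • (X ⊓ LinearMap.ker f)) + finrank K ↥(F • Y) :=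
        Submodule.finrank_add_le_finrank_add_finrank _ _
    _ ≤ finrank K ↥(F • (X ⊓ LinearMap.ker f)) + finrank K F * finrank K (X.map f) := by
        rw [← hY]
        gcongr
        exact finrank_smul_le F Y

/-- `F n` plays the role of `R(n)`, `U` that of `uΦ`, and `f` that of the projection `M → M/N`. -/
theorem not_maximal_of_extension_general (F : ℕ → Submodule K A)
    [∀ n, FiniteDimensional K (F n)]
    (hF : ∀ m k, F (m + k) ≤ F k * F m) {C r : ℝ} (hr : 0 < r)
    (hdim : ∀ n, (finrank K (F n) : ℝ) ≤ C * r ^ n) (U : Submodule K M) [FiniteDimensional K U]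
    (f : M →ₗ[K] W)
    (hker : ∀ m, Tendsto (fun n ↦
      (finrank K ↥(F n • (F m • U ⊓ LinearMap.ker f)) : ℝ) / r ^ n) atTop (nhds 0))
    (himage : Tendsto (fun n ↦ (finrank K ↥((F n • U).map f) : ℝ) / r ^ n) atTop (nhds 0)) :
    Tendsto (fun n ↦ (finrank K ↥(F n • U) : ℝ) / r ^ n) atTop (nhds 0) := by
  refine tendsto_div_pow_zero_of_le_add (C := C) hr (fun _ ↦ Nat.cast_nonneg _) (fun m k ↦ ?_)
    hker himage
  have hball : F (m + k) • U ≤ F k • F m • U :=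
    (Submodule.smul_mono_left (hF m k)).trans_eq (Submodule.smul_assoc _ _ _)
  calc (finrank K ↥(F (m + k) • U) : ℝ)
      ≤ finrank K ↥(F k • F m • U) := mod_cast Submodule.finrank_mono hball
    _ ≤ finrank K ↥(F k • (F m • U ⊓ LinearMap.ker f))
          + finrank K (F k) * finrank K ↥((F m • U).map f) :=
        mod_cast finrank_smul_le_inf_ker_add_map (F k) (F m • U) f
    _ ≤ finrank K ↥(F k • (F m • U ⊓ LinearMap.ker f))
          + C * r ^ k * finrank K ↥((F m • U).map f) := by
        gcongr
        exact hdim k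

end Growth

section FreeAlgebra

variable {Φ : Type*} [Field Φ] {r : ℕ}

theorem freeAlgFil_add_le (m k : ℕ) :
    freeAlgFil Φ r (m + k) ≤ freeAlgFil Φ r k * freeAlgFil Φ r m := by
  refine Submodule.span_le.2 ?_
  rintro _ ⟨w, hw, rfl⟩
  rw [← List.take_append_drop k w, List.map_append, List.prod_append]
  exact Submodule.mul_mem_mul
    (Submodule.subset_span ⟨w.take k, List.length_take_le k w, rfl⟩)
    (Submodule.subset_span ⟨w.drop k, by rw [List.length_drop]; lia, rfl⟩)

theorem freeAlgFil_eq_span_range (n : ℕ) :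
    freeAlgFil Φ r n = Submodule.span Φ (Set.range
      fun w : Σ j : Fin (n + 1), (Fin j → Fin r) ↦
        ((List.ofFn w.2).map (FreeAlgebra.ι Φ)).prod) := by
  unfold freeAlgFil
  congr 1
  ext x
  constructor
  · rintro ⟨w, hw, rfl⟩
    exact ⟨⟨⟨w.length, Nat.lt_succ_of_le hw⟩, w.get⟩, by simp⟩
  · rintro ⟨⟨j, w⟩, rfl⟩
    exact ⟨List.ofFn w, by simpa using Nat.le_of_lt_succ j.2, rfl⟩

instance finiteDimensional_freeAlgFil (n : ℕ) : FiniteDimensional Φ (freeAlgFil Φ r n) := by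
  rw [freeAlgFil_eq_span_range]
  exact FiniteDimensional.span_of_finite Φ (Set.finite_range _)

theorem finrank_freeAlgFil_le_sum (n : ℕ) :
    finrank Φ (freeAlgFil Φ r n) ≤ ∑ j ∈ Finset.range (n + 1), r ^ j := by
  rw [freeAlgFil_eq_span_range]
  refine (finrank_range_le_card _).trans_eq ?_
  simp [Fintype.card_sigma, Finset.sum_range]

theorem finrank_freeAlgFil_le_two_mul_pow (hr : 1 < r) (n : ℕ) :
    finrank Φ (freeAlgFil Φ r n) ≤ 2 * r ^ n := by
  have hlower : ∑ j ∈ Finset.range n, r ^ j < r ^ n :=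
    Nat.geomSum_lt hr fun _ ↦ Finset.mem_range.1
  calc finrank Φ (freeAlgFil Φ r n)
      ≤ ∑ j ∈ Finset.range (n + 1), r ^ j := finrank_freeAlgFil_le_sum n
    _ ≤ 2 * r ^ n := by rw [Finset.sum_range_succ]; lia

variable {M : Type*} [AddCommGroup M] [Module (FreeAlgebra Φ (Fin r)) M] [Module Φ M]
  [IsScalarTower Φ (FreeAlgebra Φ (Fin r)) M]

theorem cycBall_eq_smul (u : M) (n : ℕ) :
    cycBall Φ r u n = freeAlgFil Φ r n • Submodule.span Φ {u} :=
  span_image_smul_eq_smul_span_singleton _ u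

end FreeAlgebra

/-- If `M = uR` is a cyclic module over the free associative algebra of rank `r > 1` and
`N ≤ M` is a submodule such that neither `N` nor `M/N` has maximal growth (every finitely
generated submodule `(uR(m) ∩ N)·R` of `N` has `dim/rⁿ → 0`, and the quotient growth
`dim((uR(n)+N)/N)/rⁿ → 0`), then `M` does not have maximal growth: `dim uR(t)/r^t → 0`. -/
theorem not_maximal_of_extension (Φ : Type*) [Field Φ] (r : ℕ) (hr : 1 < r)
    (M : Type*) [AddCommGroup M] [Module (FreeAlgebra Φ (Fin r)) M] [Module Φ M]
    [IsScalarTower Φ (FreeAlgebra Φ (Fin r)) M]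
    (u : M) (hcyc : Submodule.span (FreeAlgebra Φ (Fin r)) {u} = ⊤)
    (N : Submodule (FreeAlgebra Φ (Fin r)) M)
    (hN : ∀ m : ℕ, Tendsto (fun n : ℕ =>
      (finrank Φ (Submodule.span Φ
        {y : M | ∃ p ∈ freeAlgFil Φ r n,
          ∃ x ∈ (cycBall Φ r u m ⊓ N.restrictScalars Φ : Submodule Φ M), y = p • x}) : ℝ)
        / (r : ℝ) ^ n) atTop (nhds 0))
    (hQ : Tendsto (fun n : ℕ =>
      (finrank Φ (Submodule.span Φ (N.mkQ '' (cycBall Φ r u n : Set M))) : ℝ)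
        / (r : ℝ) ^ n) atTop (nhds 0)) :
    Tendsto (fun t : ℕ => (finrank Φ (cycBall Φ r u t) : ℝ) / (r : ℝ) ^ t)
      atTop (nhds 0) := by
  refine (not_maximal_of_extension_general (freeAlgFil Φ r) freeAlgFil_add_le (C := 2) (r := r)
    (by positivity) (fun n ↦ mod_cast finrank_freeAlgFil_le_two_mul_pow hr n)
    (Submodule.span Φ {u}) (N.mkQ.restrictScalars Φ) (fun m ↦ (hN m).congr fun n ↦ ?_)
    (hQ.congr fun n ↦ ?_)).congr fun n ↦ ?_
  · rw [span_setOf_eq_smul, cycBall_eq_smul, LinearMap.ker_restrictScalars, N.ker_mkQ]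
  · rw [span_image_eq_map_restrictScalars, cycBall_eq_smul]
  · rw [cycBall_eq_smul]

end
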